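/- arXiv:1108.3223 — 4 statements merged into one kernel-verified Lean document; each statement's English description precedes it below -/
import Mathlib

section
/- Consider one step of the randomized optimal-consensus update. Suppose the intersection X₀ = ⋂_{i=1}^n X_i is nonempty. If x : {1,…,n} → E and x' : {1,…,n} → E are such that for each i, either x' i = P_{X_i}(x i), or x' i = ∑_{j=1}^n a_{ij} x_j for some weights a_{ij} ≥ 0 with ∑_{j=1}^n a_{ij} = 1, then max_{i=1,…,n} dist(x' i, X₀) ≤ max_{i=1,…,n} dist(x i, X₀). -/
/-- One step of the randomized optimal-consensus update does not increase
the maximal distance to the intersection `X₀ = ⋂ i, X i`. -/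
theorem stmt2 {E : Type*} [NormedAddCommGroup E] [InnerProductSpace ℝ E] [CompleteSpace E]
    {n : ℕ} (hn : 1 ≤ n)
    (X : Fin n → Set E) (hXne : ∀ i, (X i).Nonempty) (hXc : ∀ i, IsClosed (X i))
    (hXconv : ∀ i, Convex ℝ (X i))
    (X₀ : Set E) (hX₀ : X₀ = ⋂ i, X i) (hX₀ne : X₀.Nonempty)
    (P : Fin n → E → E)
    (hP : ∀ i y, P i y ∈ X i ∧ ∀ z ∈ X i, ‖y - P i y‖ ≤ ‖y - z‖)
    (x x' : Fin n → E)
    (hstep : ∀ i, x' i = P i (x i) ∨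
      ∃ a : Fin n → ℝ, (∀ j, 0 ≤ a j) ∧ (∑ j, a j = 1) ∧ x' i = ∑ j, a j • x j) :
    (⨆ i, Metric.infDist (x' i) X₀) ≤ ⨆ i, Metric.infDist (x i) X₀ := by
  have hne : Nonempty (Fin n) := ⟨⟨0, hn⟩⟩
  have hle : ∀ i, Metric.infDist (x i) X₀ ≤ ⨆ i, Metric.infDist (x i) X₀ := fun i =>
    le_ciSup (f := fun i => Metric.infDist (x i) X₀) (Set.finite_range _).bddAbove i
  have hconv : Convex ℝ X₀ := by rw [hX₀]; exact convex_iInter hXconv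
  generalize (⨆ i, Metric.infDist (x i) X₀) = M at hle
  have hM : 0 ≤ M := Metric.infDist_nonneg.trans (hle ⟨0, hn⟩)
  refine ciSup_le fun i => ?_
  rcases hstep i with h | ⟨a, ha, hs, h⟩
  · refine le_trans ?_ (hle i)
    refine (Metric.le_infDist hX₀ne).2 fun {z} hz => ?_
    refine (Metric.infDist_le_dist_of_mem hz).trans ?_
    have hzi : z ∈ X i := by rw [hX₀] at hz; exact Set.mem_iInter.1 hz i
    obtain ⟨hp, hmin⟩ := hP i (x i)
    rw [h]
    have : Nonempty (X i) := ⟨⟨z, hzi⟩⟩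
    have heq : ‖x i - P i (x i)‖ = ⨅ w : X i, ‖x i - w‖ := by
      apply le_antisymm
      · exact le_ciInf fun w => hmin w w.2
      · exact ciInf_le (f := fun w : X i => ‖x i - w‖)
          ⟨0, by rintro _ ⟨w, rfl⟩; exact norm_nonneg _⟩ ⟨_, hp⟩
    have hin := (norm_eq_iInf_iff_real_inner_le_zero (hXconv i) hp).1 heq z hzi
    rw [dist_eq_norm, dist_eq_norm]
    generalize P i (x i) = p at *
    have e : x i - z = (x i - p) - (z - p) := by abel
    have e2 := norm_sub_sq_real (x i - p) (z - p)
    rw [← e] at e2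
    rw [norm_sub_rev p z]
    refine (sq_le_sq₀ (norm_nonneg _) (norm_nonneg _)).1 ?_
    nlinarith [sq_nonneg ‖x i - p‖]
  · have key : ∀ y, y ∈ Metric.cthickening M X₀ ↔ Metric.infDist y X₀ ≤ M := by
      intro y
      rw [Metric.mem_cthickening_iff, Metric.infDist]
      exact ENNReal.le_ofReal_iff_toReal_le (Metric.infEDist_ne_top hX₀ne) hM
    rw [← key, h]
    exact (hconv.cthickening M).sum_mem (fun j _ => ha j) hs fun j _ => (key _).2 (hle j)
end

section
/- Consider one step of the randomized optimal-consensus update, and fix an index α₀ ∈ {1,…,n}. If x : {1,…,n} → E and x' : {1,…,n} → E are such that for each i, either x' i = P_{X_i}(x i), or x' i = ∑_{j=1}^n a_{ij} x_j for some weights a_{ij} ≥ 0 with ∑_{j=1}^n a_{ij} = 1, then max_{i=1,…,n} dist(x' i, X_{α₀}) ≤ max_{i=1,…,n} dist(x i, X_{α₀}) + max_{i=1,…,n} dist(x i, X_i). -/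
/-- One step of the randomized optimal-consensus update satisfies
`max_i dist(x' i, X α₀) ≤ max_i dist(x i, X α₀) + max_i dist(x i, X i)`. -/
theorem stmt3 {E : Type*} [NormedAddCommGroup E] [InnerProductSpace ℝ E] [CompleteSpace E]
    {n : ℕ} (hn : 1 ≤ n) (α₀ : Fin n)
    (X : Fin n → Set E) (hXne : ∀ i, (X i).Nonempty) (hXc : ∀ i, IsClosed (X i))
    (hXconv : ∀ i, Convex ℝ (X i))
    (P : Fin n → E → E)
    (hP : ∀ i y, P i y ∈ X i ∧ ∀ z ∈ X i, ‖y - P i y‖ ≤ ‖y - z‖)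
    (x x' : Fin n → E)
    (hstep : ∀ i, x' i = P i (x i) ∨
      ∃ a : Fin n → ℝ, (∀ j, 0 ≤ a j) ∧ (∑ j, a j = 1) ∧ x' i = ∑ j, a j • x j) :
    (⨆ i, Metric.infDist (x' i) (X α₀))
      ≤ (⨆ i, Metric.infDist (x i) (X α₀)) + ⨆ i, Metric.infDist (x i) (X i) := by
  haveI : Nonempty (Fin n) := ⟨α₀⟩
  have key : ∀ i y, ‖y - P i y‖ ≤ Metric.infDist y (X i) := by
    intro i y
    refine (Metric.le_infDist (hXne i)).2 ?_
    intro z hz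
    rw [dist_eq_norm]
    exact (hP i y).2 z hz
  have b1 : ∀ i, Metric.infDist (x i) (X α₀) ≤ ⨆ i, Metric.infDist (x i) (X α₀) := fun i =>
    le_ciSup (f := fun i => Metric.infDist (x i) (X α₀)) (Set.finite_range _).bddAbove i
  have b2 : ∀ i, Metric.infDist (x i) (X i) ≤ ⨆ i, Metric.infDist (x i) (X i) := fun i =>
    le_ciSup (f := fun i => Metric.infDist (x i) (X i)) (Set.finite_range _).bddAbove i
  refine ciSup_le ?_
  intro i
  rcases hstep i with h | ⟨a, ha, hs, h⟩
  · have h1 : Metric.infDist (x' i) (X α₀) ≤ Metric.infDist (x i) (X α₀) + dist (x' i) (x i) :=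
      Metric.infDist_le_infDist_add_dist
    have h2 : dist (x' i) (x i) ≤ Metric.infDist (x i) (X i) := by
      rw [dist_comm, dist_eq_norm, h]
      exact key i (x i)
    linarith [b1 i, b2 i]
  · have hm : ∑ j, a j • P α₀ (x j) ∈ X α₀ :=
      (hXconv α₀).sum_mem (fun j _ => ha j) hs (fun j _ => (hP α₀ (x j)).1)
    have h1 := Metric.infDist_le_dist_of_mem (x := x' i) hm
    have h2 : dist (x' i) (∑ j, a j • P α₀ (x j)) ≤ ⨆ i, Metric.infDist (x i) (X α₀) := by
      rw [dist_eq_norm, h, ← Finset.sum_sub_distrib]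
      calc _ ≤ ∑ j, ‖a j • x j - a j • P α₀ (x j)‖ := norm_sum_le _ _
        _ ≤ ∑ j, a j * ⨆ i, Metric.infDist (x i) (X α₀) := by
          refine Finset.sum_le_sum fun j _ => ?_
          rw [← smul_sub, norm_smul, Real.norm_of_nonneg (ha j)]
          exact mul_le_mul_of_nonneg_left ((key α₀ (x j)).trans (b1 j)) (ha j)
        _ = _ := by rw [← Finset.sum_mul, hs, one_mul]
    have h3 := (Metric.infDist_nonneg (x := x i) (s := X i)).trans (b2 i)
    linarith
end

section
/- Let E be a real Hilbert space, for each i ∈ {1,…,n} let X_i ⊆ E be a nonempty closed convex set, and suppose X₀ = ⋂_{i=1}^n X_i is nonempty. Let Γ denote the set of all finite compositions P_{X_{i_k}} ∘ ⋯ ∘ P_{X_{i_1}} of the metric projections onto the sets X_i (including the identity map as the empty composition). Let Y ⊆ E be a nonempty finite set, and let Δ_Y be the convex hull of { P(y) : y ∈ Y, P ∈ Γ }. Then for every w ∈ Δ_Y, dist(w, conv(Y)) ≤ 2 · max_{z ∈ Y} dist(z, X₀), where conv(Y) is the convex hull of Y. -/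
theorem proj_step_aux {E : Type*} [NormedAddCommGroup E] [InnerProductSpace ℝ E]
    {K : Set E} (hK : Convex ℝ K) {u v z : E} (hv : v ∈ K)
    (h : ∀ z ∈ K, ‖u - v‖ ≤ ‖u - z‖) (hz : z ∈ K) : ‖v - z‖ ≤ ‖u - z‖ := by
  haveI : Nonempty K := ⟨⟨v, hv⟩⟩
  have h1 : ‖u - v‖ = ⨅ w : K, ‖u - w‖ := by
    apply le_antisymm
    · exact le_ciInf fun w => h w w.2
    · exact ciInf_le (f := fun w : K => ‖u - w‖)
        ⟨0, by rintro _ ⟨w, rfl⟩; exact norm_nonneg _⟩ ⟨v, hv⟩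
  have h2 := (norm_eq_iInf_iff_real_inner_le_zero hK hv).1 h1 z hz
  have h3 : u - z = (u - v) - (z - v) := by abel
  have h4 := norm_sub_sq_real (u - v) (z - v)
  rw [← h3] at h4
  rw [norm_sub_rev v z]
  refine (sq_le_sq₀ (norm_nonneg _) (norm_nonneg _)).1 ?_
  nlinarith [sq_nonneg ‖u - v‖]

/-- For a nonempty finite set `Y`, every point of the convex hull `Δ_Y` of all
images of `Y` under finite compositions of the projections `P_{X i}` satisfies
`dist(w, conv Y) ≤ 2 · max_{z ∈ Y} dist(z, X₀)`, where `X₀ = ⋂ i, X i` is nonempty. -/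
theorem stmt6 {E : Type*} [NormedAddCommGroup E] [InnerProductSpace ℝ E] [CompleteSpace E]
    {n : ℕ}
    (X : Fin n → Set E) (hXne : ∀ i, (X i).Nonempty) (hXc : ∀ i, IsClosed (X i))
    (hXconv : ∀ i, Convex ℝ (X i))
    (X₀ : Set E) (hX₀ : X₀ = ⋂ i, X i) (hX₀ne : X₀.Nonempty)
    (P : Fin n → E → E)
    (hP : ∀ i y, P i y ∈ X i ∧ ∀ z ∈ X i, ‖y - P i y‖ ≤ ‖y - z‖)
    (Y : Finset E) (hY : Y.Nonempty)
    (ΔY : Set E)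
    (hΔ : ΔY = convexHull ℝ
      {w : E | ∃ y ∈ Y, ∃ L : List (Fin n), w = L.foldl (fun v i => P i v) y}) :
    ∀ w ∈ ΔY, Metric.infDist w (convexHull ℝ (Y : Set E))
      ≤ 2 * Y.sup' hY (fun z => Metric.infDist z X₀) := by
  intro w hw
  set M := Y.sup' hY (fun z => Metric.infDist z X₀) with hM
  have hfold : ∀ z ∈ X₀, ∀ L : List (Fin n), ∀ y : E,
      ‖L.foldl (fun v i => P i v) y - z‖ ≤ ‖y - z‖ := by
    intro z hz L
    rw [hX₀, Set.mem_iInter] at hz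
    induction L with
    | nil => intro y; simp
    | cons i L ih =>
      intro y
      exact (ih (P i y)).trans
        (proj_step_aux (hXconv i) (hP i y).1 (hP i y).2 (hz i))
  have hYc : (convexHull ℝ (Y : Set E)).Nonempty := by
    obtain ⟨y, hy⟩ := hY
    exact ⟨y, subset_convexHull ℝ _ hy⟩
  have hM0 : 0 ≤ M := by
    obtain ⟨y, hy⟩ := hY
    exact Metric.infDist_nonneg.trans (Finset.le_sup' (fun z => Metric.infDist z X₀) hy)
  have hsub : ΔY ⊆ Metric.cthickening (2 * M) (convexHull ℝ (Y : Set E)) := by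
    rw [hΔ]
    refine convexHull_min ?_ ((convex_convexHull ℝ _).cthickening _)
    rintro _ ⟨y, hy, L, rfl⟩
    refine Metric.mem_cthickening_of_dist_le _ y _ _ (subset_convexHull ℝ _ hy) ?_
    have h1 : dist (L.foldl (fun v i => P i v) y) y / 2 ≤ Metric.infDist y X₀ := by
      rw [Metric.le_infDist hX₀ne]
      intro z hz
      have h2 := hfold z hz L y
      rw [← dist_eq_norm, ← dist_eq_norm] at h2
      have h3 := dist_triangle_right (L.foldl (fun v i => P i v) y) y z
      linarith
    have h4 : Metric.infDist y X₀ ≤ M :=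
      Finset.le_sup' (fun z => Metric.infDist z X₀) hy
    linarith
  have h := hsub hw
  rw [Metric.mem_cthickening_iff] at h
  exact ENNReal.toReal_le_of_le_ofReal (by positivity) h
end

section
/- Let E be a real Hilbert space and K ⊆ E a nonempty closed convex set. Define h : E → ℝ by h(z) = (1/2)·dist(z, K)². Then h is Fréchet differentiable at every z ∈ E, and its derivative at z is the continuous linear map v ↦ ⟨z − P_K(z), v⟩; equivalently, the gradient of h at z equals z − P_K(z). -/
/-- For a nonempty closed convex set `K` in a real Hilbert space `E`, the
function `h(z) = (1/2)·dist(z, K)²` is Fréchet differentiable everywhere with derivative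
at `z` the continuous linear map `v ↦ ⟨z − P_K z, v⟩`, i.e. gradient `z − P_K z`. -/
theorem stmt9 {E : Type*} [NormedAddCommGroup E] [InnerProductSpace ℝ E] [CompleteSpace E]
    (K : Set E) (hKne : K.Nonempty) (hKc : IsClosed K) (hKconv : Convex ℝ K)
    (P : E → E) (hP : ∀ y, P y ∈ K ∧ ∀ z ∈ K, ‖y - P y‖ ≤ ‖y - z‖)
    (h : E → ℝ) (hh : h = fun z => (1 / 2) * (Metric.infDist z K) ^ 2) :
    ∀ z : E, HasFDerivAt h (innerSL ℝ (z - P z)) z := by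
  have hd : ∀ y, Metric.infDist y K = ‖y - P y‖ := by
    intro y
    apply le_antisymm
    · rw [← dist_eq_norm]
      exact Metric.infDist_le_dist_of_mem (hP y).1
    · rw [Metric.le_infDist hKne]
      intro w hw
      rw [dist_eq_norm]
      exact (hP y).2 w hw
  have hv : ∀ y, ∀ w ∈ K, inner ℝ (y - P y) (w - P y) ≤ 0 := by
    intro y
    rw [← norm_eq_iInf_iff_real_inner_le_zero hKconv (hP y).1]
    haveI : Nonempty K := hKne.to_subtype
    apply le_antisymm
    · exact le_ciInf fun w => (hP y).2 w w.2
    · exact ciInf_le (f := fun w : K => ‖y - w‖)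
        ⟨0, by rintro _ ⟨w, rfl⟩; exact norm_nonneg _⟩ ⟨P y, (hP y).1⟩
  intro z
  have key : ∀ y, 0 ≤ h y - h z - inner ℝ (z - P z) (y - z) ∧
      h y - h z - inner ℝ (z - P z) (y - z) ≤ 1 / 2 * ‖y - z‖ ^ 2 := by
    intro y
    simp only [hh, hd]
    constructor
    · have h1 := hv z (P y) (hP y).1
      have e : y - P y = (z - P z) + ((y - z) - (P y - P z)) := by abel
      have h2 := norm_add_sq_real (z - P z) ((y - z) - (P y - P z))
      rw [← e, inner_sub_right] at h2
      nlinarith [sq_nonneg ‖(y - z) - (P y - P z)‖]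
    · have h1 := (hP y).2 (P z) (hP z).1
      have e : y - P z = (z - P z) + (y - z) := by abel
      have h2 := norm_add_sq_real (z - P z) (y - z)
      rw [← e] at h2
      have h3 := pow_le_pow_left₀ (norm_nonneg _) h1 2
      linarith
  rw [hasFDerivAt_iff_isLittleO, Asymptotics.isLittleO_iff]
  intro c hc
  filter_upwards [Metric.ball_mem_nhds z hc] with y hy
  rw [Metric.mem_ball, dist_eq_norm] at hy
  obtain ⟨k1, k2⟩ := key y
  rw [innerSL_apply_apply, Real.norm_eq_abs, abs_of_nonneg k1]
  nlinarith [norm_nonneg (y - z), mul_le_mul_of_nonneg_right hy.le (norm_nonneg (y - z))]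
end
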